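/- Let V = ℝ^n with the dot inner product, K = ℝ^n_+, and take |||·||| = ‖·‖_∞ (the norm induced by (ℝ^n_+, e) with e = (1,…,1), whose dual norm is ‖·‖₁), and let ‖·‖ be an arbitrary norm on ℝ^n. Then for every m-dimensional linear subspace L ⊆ ℝ^n with m < n: ν(L) = max_{x∈L, ‖x‖≤1} min_{1≤j≤n} x_j, where ν(L) := min{‖y−u‖* : u ∈ ℝ^n_+, ‖u‖₁ = 1, y ∈ L^⊥}. -/

import Mathlib

/-!
The identity is linear programming duality for the bilinear form `⟪u, x⟫` between the standard
simplex and the `N`-unit ball of `L`.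

Weak duality (`iInf_le_dualNorm_sub`): if `u` lies in the simplex, `y ∈ Lᗮ`, `x ∈ L` and
`N x ≤ 1`, then `min_j x_j ≤ ⟪u, x⟫ = ⟪y - u, -x⟫ ≤ ‖y - u‖*`.

Strong duality: let `v` be the supremum on the right. The `N`-unit ball of `L` is disjoint from the
open convex set `{z | ∀ i, v < z i}`, and a separating hyperplane gives a point `u` of the simplex
with `⟪u, x⟫ ≤ v` on that ball (`exists_simplex_le`). Hence `⟪u, x⟫ ≤ v * N x` on `L`, and the
Hahn-Banach theorem extends the restriction of `⟪u, ·⟫` to `L` to a functional `⟪w, ·⟫`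
dominated by `v * N` everywhere (`exists_orthogonal_dualNorm_le`). Then `y = u - w` lies in `Lᗮ` and
`‖y - u‖* = ‖-w‖* ≤ v`, so `v` is attained as a minimum on the left.
-/


open Module RealInnerProductSpace

/-- `N` is a norm on the real vector space `V`. -/
structure IsNorm (V : Type*) [AddCommGroup V] [Module ℝ V] (N : V → ℝ) : Prop where
  nonneg : ∀ x, 0 ≤ N x
  eq_zero_iff : ∀ x, N x = 0 ↔ x = 0
  smul_eq : ∀ (c : ℝ) (x : V), N (c • x) = |c| * N x
  add_le : ∀ x y, N (x + y) ≤ N x + N y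

/-- `K` is a regular closed convex cone: closed, convex, a cone, pointed and solid. -/
structure IsRegularCone (V : Type*) [NormedAddCommGroup V] [InnerProductSpace ℝ V]
    (K : Set V) : Prop where
  closed : IsClosed K
  convex : Convex ℝ K
  smul_mem : ∀ ⦃c : ℝ⦄, 0 < c → ∀ ⦃x⦄, x ∈ K → c • x ∈ K
  pointed : K ∩ (-K) = {0}
  solid : (interior K).Nonempty

variable {V : Type*} [NormedAddCommGroup V] [InnerProductSpace ℝ V]

/-- The dual norm of `N` with respect to the inner product of `V`. -/
noncomputable def dualNorm (N : V → ℝ) (u : V) : ℝ :=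
  sSup {r : ℝ | ∃ x : V, N x = 1 ∧ r = ⟪u, x⟫}

/-- The dual cone of `K`. -/
def dualCone (K : Set V) : Set V := {u : V | ∀ x ∈ K, 0 ≤ ⟪u, x⟫}

/-- `dist(L1,L2) = max_{x ∈ L1, x ≠ 0} min_{v ∈ L2} |||x - v||| / ‖x‖`,
with `‖·‖ = N` and `|||·||| = N'`. -/
noncomputable def grDist (N N' : V → ℝ) (L1 L2 : Submodule ℝ V) : ℝ :=
  sSup {d : ℝ | ∃ x ∈ L1, x ≠ 0 ∧ d = sInf {c : ℝ | ∃ v ∈ L2, c = N' (x - v) / N x}}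

/-- `odist(L1,L2) = max_{x ∈ L1, x ≠ 0} inf_{v ∈ L2, v ≠ 0} |||x - v||| / ‖v‖`. -/
noncomputable def grOdist (N N' : V → ℝ) (L1 L2 : Submodule ℝ V) : ℝ :=
  sSup {d : ℝ | ∃ x ∈ L1, x ≠ 0 ∧
    d = sInf {c : ℝ | ∃ v ∈ L2, v ≠ 0 ∧ c = N' (x - v) / N v}}

/-- The set `Σ_m` of ill-posed `m`-dimensional subspaces. -/
def SigmaIll (K : Set V) (m : ℕ) : Set (Submodule ℝ V) :=
  {L | finrank ℝ L = m ∧ (L : Set V) ∩ K ≠ {0} ∧ (Lᗮ : Set V) ∩ dualCone K ≠ {0}}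

/-- `dist(L, Σ_m) = inf_{L' ∈ Σ_m} dist(L, L')`. -/
noncomputable def distToIll (N N' : V → ℝ) (K : Set V) (m : ℕ) (L : Submodule ℝ V) : ℝ :=
  sInf {d : ℝ | ∃ L' ∈ SigmaIll K m, d = grDist N N' L L'}

/-- `odist(Σ_m, L) = inf_{L' ∈ Σ_m} odist(L', L)`. -/
noncomputable def odistToIll (N N' : V → ℝ) (K : Set V) (m : ℕ) (L : Submodule ℝ V) : ℝ :=
  sInf {d : ℝ | ∃ L' ∈ SigmaIll K m, d = grOdist N N' L' L}

/-- `ν(L) = min {‖y - u‖* : u ∈ K*, y ∈ L^⊥, |||u|||* = 1}`. -/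
noncomputable def nu (N N' : V → ℝ) (K : Set V) (L : Submodule ℝ V) : ℝ :=
  sInf {r : ℝ | ∃ u ∈ dualCone K, ∃ y ∈ Lᗮ, dualNorm N' u = 1 ∧ r = dualNorm N (y - u)}

/-- `ν̄(L) = min {|||v - x||| : v ∈ K, x ∈ L, ‖x‖ = 1}`. -/
noncomputable def nubar (N N' : V → ℝ) (K : Set V) (L : Submodule ℝ V) : ℝ :=
  sInf {r : ℝ | ∃ v ∈ K, ∃ x ∈ L, N x = 1 ∧ r = N' (v - x)}

/-- `λ_v(x) = sup {t : x - t v ∈ K}`. -/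
noncomputable def lambdaVec (K : Set V) (v x : V) : ℝ := sSup {t : ℝ | x - t • v ∈ K}

/-- `σ(L) = min_{v ∈ K, |||v||| = 1} max_{x ∈ L, ‖x‖ ≤ 1} λ_v(x)`. -/
noncomputable def sigmaMeas (N N' : V → ℝ) (K : Set V) (L : Submodule ℝ V) : ℝ :=
  sInf {r : ℝ | ∃ v ∈ K, N' v = 1 ∧
    r = sSup {c : ℝ | ∃ x ∈ L, N x ≤ 1 ∧ c = lambdaVec K v x}}

/-- `Sym(L) = min_{v ∈ K, ‖v‖ = 1} sup {t ≥ 0 : ∃ x ∈ K, ‖x‖ ≤ 1, x + t v ∈ L}`. -/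
noncomputable def symMeas (N : V → ℝ) (K : Set V) (L : Submodule ℝ V) : ℝ :=
  sInf {r : ℝ | ∃ v ∈ K, N v = 1 ∧
    r = sSup {t : ℝ | 0 ≤ t ∧ ∃ x ∈ K, N x ≤ 1 ∧ x + t • v ∈ L}}

/-- The norm `‖·‖_e` induced by the pair `(K, e)`. -/
noncomputable def inducedNorm (K : Set V) (e : V) (x : V) : ℝ :=
  sInf {α : ℝ | 0 ≤ α ∧ x + α • e ∈ K ∧ -x + α • e ∈ K}

theorem IsNorm.neg {N : V → ℝ} (hN : IsNorm V N) (x : V) : N (-x) = N x := by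
  simpa using hN.smul_eq (-1) x

theorem IsNorm.pos {N : V → ℝ} (hN : IsNorm V N) {x : V} (hx : x ≠ 0) : 0 < N x :=
  lt_of_le_of_ne (hN.nonneg x) fun h => hx ((hN.eq_zero_iff x).1 h.symm)

theorem IsNorm.zero {N : V → ℝ} (hN : IsNorm V N) : N 0 = 0 := (hN.eq_zero_iff 0).2 rfl

theorem IsNorm.map_inv_smul {N : V → ℝ} (hN : IsNorm V N) {x : V} (hx : x ≠ 0) :
    N ((N x)⁻¹ • x) = 1 := by
  have h := hN.pos hx
  rw [hN.smul_eq, abs_of_pos (inv_pos.2 h), inv_mul_cancel₀ h.ne']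

theorem IsNorm.convexOn {N : V → ℝ} (hN : IsNorm V N) : ConvexOn ℝ Set.univ N := by
  refine ⟨convex_univ, fun x _ y _ a b ha hb _ => ?_⟩
  refine (hN.add_le _ _).trans_eq ?_
  rw [hN.smul_eq, hN.smul_eq, abs_of_nonneg ha, abs_of_nonneg hb, smul_eq_mul, smul_eq_mul]

/-- In finite dimension, `N` dominates a multiple of the inner product norm: being convex, `N` is
continuous, so it attains a positive minimum on the unit sphere. -/
theorem IsNorm.exists_norm_le [FiniteDimensional ℝ V] {N : V → ℝ} (hN : IsNorm V N) :
    ∃ C : ℝ, ∀ x, ‖x‖ ≤ C * N x := by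
  rcases subsingleton_or_nontrivial V with hV | hV
  · exact ⟨0, fun x => by simp [Subsingleton.elim x 0]⟩
  have hc : Continuous N := hN.convexOn.locallyLipschitz.continuous
  have : ProperSpace V := FiniteDimensional.proper ℝ V
  obtain ⟨x₀, hx₀, hmin⟩ := (isCompact_sphere (0 : V) 1).exists_isMinOn
    (NormedSpace.sphere_nonempty.2 zero_le_one) hc.continuousOn
  have hx₀' : x₀ ≠ 0 := by
    rintro rfl
    simp at hx₀
  have hpos := hN.pos hx₀'
  refine ⟨(N x₀)⁻¹, fun x => ?_⟩
  rcases eq_or_ne x 0 with rfl | hx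
  · simp [hN.zero]
  have hxn : 0 < ‖x‖ := norm_pos_iff.2 hx
  have h : N x₀ ≤ N (‖x‖⁻¹ • x) := hmin (by simp [norm_smul, hxn.ne'])
  rw [hN.smul_eq, abs_of_pos (inv_pos.2 hxn), inv_mul_eq_div, le_div_iff₀ hxn] at h
  rw [inv_mul_eq_div, le_div_iff₀ hpos]
  linarith

/-- The supremum defining the dual norm is over a bounded set, hence is not a junk value. -/
theorem IsNorm.bddAbove_dualNorm [FiniteDimensional ℝ V] {N : V → ℝ} (hN : IsNorm V N) (w : V) :
    BddAbove {r : ℝ | ∃ x : V, N x = 1 ∧ r = ⟪w, x⟫} := by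
  obtain ⟨C, hC⟩ := hN.exists_norm_le
  refine ⟨‖w‖ * C, ?_⟩
  rintro _ ⟨x, hx, rfl⟩
  have h := hC x
  rw [hx, mul_one] at h
  exact (real_inner_le_norm w x).trans (mul_le_mul_of_nonneg_left h (norm_nonneg w))

theorem IsNorm.inner_le_dualNorm_mul [FiniteDimensional ℝ V] {N : V → ℝ} (hN : IsNorm V N)
    (w x : V) : ⟪w, x⟫ ≤ dualNorm N w * N x := by
  rcases eq_or_ne x 0 with rfl | hx
  · simp [hN.zero]
  have h : ⟪w, (N x)⁻¹ • x⟫ ≤ dualNorm N w :=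
    le_csSup (hN.bddAbove_dualNorm w) ⟨_, hN.map_inv_smul hx, rfl⟩
  rwa [real_inner_smul_right, inv_mul_eq_div, div_le_iff₀ (hN.pos hx)] at h

theorem IsNorm.dualNorm_nonneg [FiniteDimensional ℝ V] {N : V → ℝ} (hN : IsNorm V N) (w : V) :
    0 ≤ dualNorm N w := by
  by_cases h : ∃ x, N x = 1
  · obtain ⟨x, hx⟩ := h
    have h₁ := hN.inner_le_dualNorm_mul w x
    have h₂ := hN.inner_le_dualNorm_mul w (-x)
    rw [hN.neg, inner_neg_right] at h₂
    rw [hx] at h₁ h₂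
    linarith
  · push Not at h
    simp [dualNorm, h]

/-- Hahn-Banach: if `⟪u, ·⟫` is dominated by `v` on the `N`-unit ball of `L`, then some `y ∈ Lᗮ` is
at dual distance at most `v` from `u`. -/
theorem IsNorm.exists_orthogonal_dualNorm_le [FiniteDimensional ℝ V] {N : V → ℝ}
    (hN : IsNorm V N) (L : Submodule ℝ V) (u : V) {v : ℝ} (hv : 0 ≤ v)
    (h : ∀ x ∈ L, N x ≤ 1 → ⟪u, x⟫ ≤ v) : ∃ y ∈ Lᗮ, dualNorm N (y - u) ≤ v := by
  have hL : ∀ x ∈ L, ⟪u, x⟫ ≤ v * N x := by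
    intro x hx
    rcases eq_or_ne x 0 with rfl | hx0
    · simp [hN.zero]
    have := h _ (L.smul_mem (N x)⁻¹ hx) (hN.map_inv_smul hx0).le
    rwa [real_inner_smul_right, inv_mul_eq_div, div_le_iff₀ (hN.pos hx0)] at this
  obtain ⟨g, hgL, hg⟩ := exists_extension_of_le_sublinear
    ⟨L, ((innerSL ℝ u : V →L[ℝ] ℝ) : V →ₗ[ℝ] ℝ).domRestrict L⟩ (fun x => v * N x)
    (fun c hc x => by rw [hN.smul_eq, abs_of_pos hc]; ring)
    (fun x y => by rw [← mul_add]; exact mul_le_mul_of_nonneg_left (hN.add_le x y) hv)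
    (fun x => hL x x.2)
  have : CompleteSpace V := FiniteDimensional.complete ℝ V
  set w : V := (InnerProductSpace.toDual ℝ V).symm g.toContinuousLinearMap with hw
  have hwg : ∀ x, ⟪w, x⟫ = g x := fun x => by
    rw [hw, InnerProductSpace.toDual_symm_apply]; rfl
  refine ⟨u - w, ?_, ?_⟩
  · refine (Submodule.mem_orthogonal' L _).2 fun x hx => ?_
    have : g x = ⟪u, x⟫ := hgL ⟨x, hx⟩
    rw [inner_sub_left, hwg, this, sub_self]
  · refine Real.sSup_le ?_ hv
    rintro _ ⟨x, hx, rfl⟩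
    have := hg (-x)
    simp only [hN.neg, hx, map_neg] at this
    rw [sub_sub_cancel_left, inner_neg_left, hwg]
    linarith

/-- Weak duality. -/
theorem iInf_le_dualNorm_sub {n : ℕ} [NeZero n] {N : EuclideanSpace ℝ (Fin n) → ℝ}
    (hN : IsNorm (EuclideanSpace ℝ (Fin n)) N) (L : Submodule ℝ (EuclideanSpace ℝ (Fin n)))
    {u x y : EuclideanSpace ℝ (Fin n)} (hu : ∀ i, 0 ≤ u i) (hu1 : ∑ i, |u i| = 1) (hy : y ∈ Lᗮ)
    (hx : x ∈ L) (hx1 : N x ≤ 1) : ⨅ j, x j ≤ dualNorm N (y - u) := by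
  have h₁ : ⨅ j, x j ≤ ⟪u, x⟫ := by
    have : ∑ i, u i * (⨅ j, x j) ≤ ∑ i, u i * x i :=
      Finset.sum_le_sum fun i _ =>
        mul_le_mul_of_nonneg_left (ciInf_le (Set.finite_range _).bddBelow i) (hu i)
    rw [← Finset.sum_mul, ← Finset.sum_congr rfl fun i _ => abs_of_nonneg (hu i), hu1,
      one_mul] at this
    simpa [PiLp.inner_apply, mul_comm] using this
  have h₂ : ⟪u, x⟫ = ⟪y - u, -x⟫ := by
    rw [inner_neg_right, inner_sub_left, (Submodule.mem_orthogonal' L y).1 hy x hx]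
    ring
  have h₃ := hN.inner_le_dualNorm_mul (y - u) (-x)
  rw [hN.neg] at h₃
  have h₄ := mul_le_of_le_one_right (hN.dualNorm_nonneg (y - u)) hx1
  linarith

/-- If every point of a convex set `s ∋ 0` has a coordinate at most `v`, then one convex
combination of the coordinates is at most `v` on all of `s`. -/
theorem exists_simplex_le {n : ℕ} {s : Set (EuclideanSpace ℝ (Fin n))}
    (hs : Convex ℝ s) (h0 : (0 : EuclideanSpace ℝ (Fin n)) ∈ s) {v : ℝ} (hv : 0 ≤ v)
    (h : ∀ x ∈ s, ∃ i, x i ≤ v) :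
    ∃ u : EuclideanSpace ℝ (Fin n), (∀ i, 0 ≤ u i) ∧ ∑ i, |u i| = 1 ∧ ∀ x ∈ s, ⟪u, x⟫ ≤ v := by
  let t : Set (EuclideanSpace ℝ (Fin n)) := {z | ∀ i, v < z i}
  have ht : Convex ℝ t := by
    intro x hx y hy a b ha hb hab i
    have := convex_Ioi v (hx i) (hy i) ha hb hab
    simpa using this
  have hto : IsOpen t := by
    simp only [t, Set.ofPred_forall]
    exact isOpen_iInter_of_finite fun i => isOpen_lt continuous_const (by fun_prop)
  have hdisj : Disjoint t s := Set.disjoint_left.2 fun x hxt hxs => by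
    obtain ⟨i, hi⟩ := h x hxs
    exact (hxt i).not_ge hi
  obtain ⟨f, k, hft, hfs⟩ := geometric_hahn_banach_open ht hto hs hdisj
  have hk : k ≤ 0 := by simpa using hfs 0 h0
  set p : EuclideanSpace ℝ (Fin n) := -(InnerProductSpace.toDual ℝ _).symm f with hp
  have hpf : ∀ x, f x = -∑ i, p i * x i := fun x => by
    have : ⟪p, x⟫ = -f x := by
      rw [hp, inner_neg_left, InnerProductSpace.toDual_symm_apply]
    rw [PiLp.inner_apply] at this
    simp only [RCLike.inner_apply, conj_trivial] at this
    simp only [mul_comm (p _)]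
    linarith
  -- Letting `δ → 0` in the separation inequality at `(v + δ) • (1, …, 1)`.
  have hconst : ∀ δ : ℝ, 0 < δ → -k < (v + δ) * ∑ i, p i := fun δ hδ => by
    have := hft (WithLp.toLp 2 fun _ => v + δ) fun i => by simpa using hδ
    rw [hpf] at this
    simp only [← Finset.sum_mul] at this
    linarith
  have hS : 0 < ∑ i, p i := by
    have := hconst 1 one_pos
    by_contra! hneg
    nlinarith
  have hkv : -k ≤ v * ∑ i, p i := by
    refine le_of_forall_pos_lt_add fun ε hε => ?_
    have := hconst (ε / ∑ i, p i) (div_pos hε hS)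
    rwa [add_mul, div_mul_cancel₀ _ hS.ne'] at this
  have hp0 : ∀ i, 0 ≤ p i := by
    intro j
    by_contra! hneg
    -- Along `(v + 1) • (1, …, 1) + M • e_j` the functional would be eventually negative.
    set M : ℝ := (v + 1) * (∑ i, p i) / (-p j) with hM
    have hM0 : 0 ≤ M := div_nonneg (by positivity) (by linarith)
    have := hft (WithLp.toLp 2 fun i => v + 1 + if i = j then M else 0) fun i => by
      simp only
      split_ifs <;> linarith
    rw [hpf] at this
    simp only [mul_add, Finset.sum_add_distrib, mul_ite, mul_zero, Finset.sum_ite_eq',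
      Finset.mem_univ, if_true, mul_one] at this
    rw [← Finset.sum_mul] at this
    have hMj : M * (-p j) = (v + 1) * ∑ i, p i := div_mul_cancel₀ _ (by linarith)
    linarith
  refine ⟨(∑ i, p i)⁻¹ • p, fun i => mul_nonneg (inv_nonneg.2 hS.le) (hp0 i), ?_, fun x hx => ?_⟩
  · simp only [PiLp.smul_apply, smul_eq_mul, abs_mul, abs_of_pos (inv_pos.2 hS),
      abs_of_nonneg (hp0 _), ← Finset.mul_sum]
    exact inv_mul_cancel₀ hS.ne'
  · have h₁ := hfs x hx
    rw [hpf] at h₁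
    rw [real_inner_smul_left, inv_mul_eq_div, div_le_iff₀ hS, PiLp.inner_apply]
    simp only [RCLike.inner_apply, conj_trivial, mul_comm (x _)]
    linarith

/-- For `V = ℝⁿ`, `K = ℝⁿ₊`, `|||·||| = ‖·‖_∞` (with dual norm `‖·‖₁`) and an arbitrary
norm `‖·‖` on `ℝⁿ`: `ν(L) = max_{x ∈ L, ‖x‖ ≤ 1} min_j x_j`. -/
theorem stmt_19 (n m : ℕ) (hm : m < n)
    (N : EuclideanSpace ℝ (Fin n) → ℝ) (hN : IsNorm (EuclideanSpace ℝ (Fin n)) N)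
    (L : Submodule ℝ (EuclideanSpace ℝ (Fin n))) (hL : finrank ℝ L = m) :
    sInf {r : ℝ | ∃ u : EuclideanSpace ℝ (Fin n), (∀ i, 0 ≤ u i) ∧ (∑ i, |u i|) = 1 ∧
        ∃ y ∈ Lᗮ, r = dualNorm N (y - u)} =
      sSup {r : ℝ | ∃ x ∈ L, N x ≤ 1 ∧ r = ⨅ j, x j} := by
  have : NeZero n := ⟨by omega⟩
  set S : Set ℝ := {r : ℝ | ∃ x ∈ L, N x ≤ 1 ∧ r = ⨅ j, x j} with hS
  have h0S : (0 : ℝ) ∈ S := ⟨0, L.zero_mem, by simp [hN.zero], by simp⟩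
  -- Any feasible pair `(u, y)` bounds `S` above; here `u` is a vertex of the simplex and `y = 0`.
  have hbdd : BddAbove S := by
    refine ⟨dualNorm N (0 - EuclideanSpace.single 0 1), ?_⟩
    rintro _ ⟨x, hx, hx1, rfl⟩
    refine iInf_le_dualNorm_sub hN L (fun i => ?_) ?_ Lᗮ.zero_mem hx hx1
    · rw [PiLp.single_apply]
      split_ifs <;> norm_num
    · simp [PiLp.single_apply, apply_ite abs]
  have hv : 0 ≤ sSup S := le_csSup hbdd h0S
  have hball : Convex ℝ {x | x ∈ L ∧ N x ≤ 1} := by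
    have := hN.convexOn.convex_le 1
    simp only [Set.mem_univ, true_and] at this
    exact L.convex.inter this
  have hlow : ∀ r ∈ {r : ℝ | ∃ u : EuclideanSpace ℝ (Fin n), (∀ i, 0 ≤ u i) ∧ (∑ i, |u i|) = 1 ∧
      ∃ y ∈ Lᗮ, r = dualNorm N (y - u)}, sSup S ≤ r := by
    rintro _ ⟨u, hu, hu1, y, hy, rfl⟩
    refine csSup_le ⟨0, h0S⟩ ?_
    rintro _ ⟨x, hx, hx1, rfl⟩
    exact iInf_le_dualNorm_sub hN L hu hu1 hy hx hx1
  obtain ⟨u, hu, hu1, hux⟩ := exists_simplex_le hball ⟨L.zero_mem, by simp [hN.zero]⟩ hv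
    fun x hx => by
      obtain ⟨i, hi⟩ := exists_eq_ciInf_of_finite (f := fun j => x j)
      exact ⟨i, hi.trans_le (le_csSup hbdd ⟨x, hx.1, hx.2, rfl⟩)⟩
  obtain ⟨y, hy, hyu⟩ := hN.exists_orthogonal_dualNorm_le L u hv fun x hx hx1 => hux x ⟨hx, hx1⟩
  exact le_antisymm ((csInf_le ⟨_, hlow⟩ ⟨u, hu, hu1, y, hy, rfl⟩).trans hyu)
    (le_csInf ⟨_, u, hu, hu1, y, hy, rfl⟩ hlow)
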